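/- arXiv:1403.1156 — 6 statements merged into one kernel-verified Lean document; each statement's English description precedes it below -/
import Mathlib

section
/- Let d ≥ 1, T > 0, L ≥ 0, and let V : ℝ^d → [0,∞) be upper semicontinuous. For each n ∈ ℕ let ξ_n : [0,T] → ℝ^d be an L-Lipschitz path such that for Lebesgue-almost every t ∈ [0,T], ξ_n is differentiable at t and |ξ_n'(t)| ≤ V(ξ_n(t)). Suppose ξ_n → ξ uniformly on [0,T]. Then ξ is L-Lipschitz and for Lebesgue-almost every t ∈ [0,T], ξ is differentiable at t and |ξ'(t)| ≤ V(ξ(t)). -/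
/-!
Almost-everywhere speed bounds do not pass to uniform limits directly, because the derivatives need
not converge. The idea is to trade them for local Lipschitz bounds, which do. Let `ξ` be
differentiable at `t` and let `c > V (ξ t)`. By upper semicontinuity `V < c` on a ball around `ξ t`;
by uniform convergence and continuity of `ξ`, the paths `ξ_n` with `n` large stay in that ball
during a time window around `t` that does not depend on `n`. Within the window the speed of `ξ_n`
is a.e. at most `c`, so `ξ_n` satisfies the mean value inequality with constant `c`
(`norm_sub_le_of_ae_hasDerivAt`, where the Lipschitz property of `ξ_n` is needed). This inequality
survives the limit and gives `‖ξ' t‖ ≤ c`; then let `c ↓ V (ξ t)`. Differentiability of `ξ` almost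
everywhere is Rademacher's theorem.
-/


open MeasureTheory Set
open scoped ENNReal NNReal

/-- Mean value inequality for a Lipschitz path whose speed is bounded almost everywhere. It follows
from the fundamental theorem of calculus for the absolutely continuous scalar function
`t ↦ ⟪f b - f a, f t⟫`. -/
theorem norm_sub_le_of_ae_hasDerivAt {E : Type*} [NormedAddCommGroup E] [InnerProductSpace ℝ E]
    {f : ℝ → E} {K : ℝ≥0} {a b c : ℝ} (hab : a ≤ b) (hf : LipschitzOnWith K f (Icc a b))
    (hd : ∀ᵐ t, t ∈ Ioo a b → ∃ f', HasDerivAt f f' t ∧ ‖f'‖ ≤ c) :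
    ‖f b - f a‖ ≤ c * (b - a) := by
  set w := f b - f a with hw
  rcases eq_or_ne w 0 with h0 | h0
  · rcases hab.eq_or_lt with rfl | hlt
    · simp [h0]
    · -- Nonnegativity of `c` comes from the existence of one point where the speed bound holds.
      have hc : 0 ≤ c := by
        by_contra hc
        have h1 : ∀ᵐ t, t ∉ Ioo a b := by
          filter_upwards [hd] with t ht hmem
          obtain ⟨f', -, h⟩ := ht hmem
          exact hc ((norm_nonneg _).trans h)
        have h2 : volume (Ioo a b) = 0 := measure_eq_zero_iff_ae_notMem.2 h1
        rw [Real.volume_Ioo, ENNReal.ofReal_eq_zero] at h2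
        linarith
      rw [h0, norm_zero]
      exact mul_nonneg hc (by linarith)
  · set g : ℝ → ℝ := fun t => inner ℝ w (f t) with hg
    have hglip : LipschitzOnWith (‖innerSL ℝ w‖₊ * K) g (Icc a b) :=
      (innerSL ℝ w).lipschitz.comp_lipschitzOnWith hf
    have hac : AbsolutelyContinuousOnInterval g a b := by
      apply LipschitzOnWith.absolutelyContinuousOnInterval (K := ‖innerSL ℝ w‖₊ * K)
      rwa [uIcc_of_le hab]
    have hint := hac.integral_deriv_eq_sub
    have hgw : g b - g a = ‖w‖ * ‖w‖ := by
      rw [hg]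
      simp only
      rw [← inner_sub_right, ← hw, real_inner_self_eq_norm_mul_norm]
    have hle : ∫ t in a..b, deriv g t ≤ ∫ _ in a..b, ‖w‖ * c := by
      apply intervalIntegral.integral_mono_ae_restrict hab hac.intervalIntegrable_deriv (by simp)
      rw [Filter.EventuallyLE, ← restrict_Ioo_eq_restrict_Icc, ae_restrict_iff' measurableSet_Ioo]
      filter_upwards [hd] with t ht hmem
      obtain ⟨f', h1, h2⟩ := ht hmem
      have h3 : HasDerivAt g (inner ℝ w f') t :=
        (innerSL ℝ w).hasFDerivAt.comp_hasDerivAt t h1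
      rw [h3.deriv]
      exact (real_inner_le_norm _ _).trans (by gcongr)
    rw [hint, hgw, intervalIntegral.integral_const, smul_eq_mul] at hle
    have hpos : 0 < ‖w‖ := norm_pos_iff.2 h0
    refine le_of_mul_le_mul_left ?_ hpos
    linarith

/-- A speed bound that holds at almost every time of `[0, T]` at which `|t - t₀| < r` gives the
mean value inequality between `t₀` and any time of that window. -/
theorem norm_sub_le_of_ae_derivWithin {E : Type*} [NormedAddCommGroup E] [InnerProductSpace ℝ E]
    {f : ℝ → E} {K : ℝ≥0} {T t₀ r c : ℝ} (hf : LipschitzOnWith K f (Icc 0 T))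
    (hd : ∀ᵐ t, t ∈ Icc 0 T → |t - t₀| < r →
      DifferentiableWithinAt ℝ f (Icc 0 T) t ∧ ‖derivWithin f (Icc 0 T) t‖ ≤ c)
    {s : ℝ} (ht₀ : t₀ ∈ Icc 0 T) (hs : s ∈ Icc 0 T) (hsr : |s - t₀| < r) :
    ‖f s - f t₀‖ ≤ c * |s - t₀| := by
  have key : ∀ a b : ℝ, a ≤ b → a ∈ Icc 0 T → b ∈ Icc 0 T → |a - t₀| < r → |b - t₀| < r →
      ‖f b - f a‖ ≤ c * (b - a) := by
    intro a b hab ha hb har hbr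
    refine norm_sub_le_of_ae_hasDerivAt hab (hf.mono (Icc_subset_Icc ha.1 hb.2)) ?_
    filter_upwards [hd] with t ht hmem
    have hlo : 0 < t := ha.1.trans_lt hmem.1
    have hhi : t < T := hmem.2.trans_le hb.2
    have hr : |t - t₀| < r := by
      rw [abs_lt] at *
      constructor <;> linarith [hmem.1, hmem.2]
    obtain ⟨h1, h2⟩ := ht ⟨hlo.le, hhi.le⟩ hr
    exact ⟨_, h1.hasDerivWithinAt.hasDerivAt (Icc_mem_nhds hlo hhi), h2⟩
  have h0 : |t₀ - t₀| < r := by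
    rw [sub_self, abs_zero]
    exact (abs_nonneg _).trans_lt hsr
  rcases le_total t₀ s with h | h
  · rw [abs_of_nonneg (sub_nonneg.2 h)]
    exact key _ _ h ht₀ hs h0 hsr
  · rw [abs_sub_comm, abs_of_nonneg (sub_nonneg.2 h), norm_sub_rev]
    exact key _ _ h hs ht₀ hsr h0

/-- deterministic core of Theorem 3.6 / Lemma 3.5.
Let `V : ℝ^d → [0,∞)` be upper semicontinuous.  If `ξ_n : [0,T] → ℝ^d` are `L`-Lipschitz
paths obeying the speed limit `V` almost everywhere and `ξ_n → ξ` uniformly on `[0,T]`,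
then `ξ` is `L`-Lipschitz and obeys the speed limit `V` almost everywhere. -/
theorem stmt_5 (d : ℕ) (hd : 1 ≤ d) (T : ℝ) (hT : 0 < T) (L : ℝ≥0)
    (V : EuclideanSpace ℝ (Fin d) → ℝ) (hV0 : ∀ z, 0 ≤ V z)
    (hVusc : UpperSemicontinuous V)
    (ξn : ℕ → ℝ → EuclideanSpace ℝ (Fin d)) (ξ : ℝ → EuclideanSpace ℝ (Fin d))
    (hlip : ∀ n, LipschitzOnWith L (ξn n) (Set.Icc 0 T))
    (hae : ∀ n, ∀ᵐ t ∂(volume.restrict (Set.Icc 0 T)),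
      DifferentiableWithinAt ℝ (ξn n) (Set.Icc 0 T) t ∧
        ‖derivWithin (ξn n) (Set.Icc 0 T) t‖ ≤ V (ξn n t))
    (hconv : TendstoUniformlyOn ξn ξ Filter.atTop (Set.Icc 0 T)) :
    LipschitzOnWith L ξ (Set.Icc 0 T) ∧
      ∀ᵐ t ∂(volume.restrict (Set.Icc 0 T)),
        DifferentiableWithinAt ℝ ξ (Set.Icc 0 T) t ∧
          ‖derivWithin ξ (Set.Icc 0 T) t‖ ≤ V (ξ t) := by
  have hpt : ∀ t ∈ Icc 0 T, Filter.Tendsto (fun n => ξn n t) Filter.atTop (nhds (ξ t)) :=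
    fun t ht => hconv.tendsto_at ht
  have hξ : LipschitzOnWith L ξ (Icc 0 T) := by
    refine LipschitzOnWith.of_dist_le_mul fun x hx y hy => ?_
    exact le_of_tendsto ((hpt x hx).dist (hpt y hy))
      (Filter.Eventually.of_forall fun n => (hlip n).dist_le_mul x hx y hy)
  refine ⟨hξ, ?_⟩
  filter_upwards [hξ.ae_differentiableWithinAt measurableSet_Icc,
    ae_restrict_mem measurableSet_Icc] with t hdiff ht
  refine ⟨hdiff, le_of_forall_gt_imp_ge_of_dense fun c hc => ?_⟩
  obtain ⟨δ, hδ, hball⟩ := Metric.eventually_nhds_iff.1 (hVusc (ξ t) c hc)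
  obtain ⟨r, hr, hcont⟩ :=
    Metric.continuousWithinAt_iff.1 (hξ.continuousOn t ht) (δ / 2) (half_pos hδ)
  have hloc : ∀ s ∈ Icc 0 T, |s - t| < r → ‖ξ s - ξ t‖ ≤ c * |s - t| := by
    intro s hs hsr
    refine le_of_tendsto ((hpt s hs).sub (hpt t ht)).norm ?_
    filter_upwards [Metric.tendstoUniformlyOn_iff.1 hconv (δ / 2) (half_pos hδ)] with n hn
    refine norm_sub_le_of_ae_derivWithin (hlip n) (r := r) ?_ ht hs hsr
    filter_upwards [(ae_restrict_iff' measurableSet_Icc).1 (hae n)] with u hu huI hur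
    refine ⟨(hu huI).1, (hu huI).2.trans (hball ?_).le⟩
    have h1 := hn u huI
    have h2 := hcont huI (by rwa [Real.dist_eq])
    rw [dist_comm] at h1
    linarith [dist_triangle (ξn n u) (ξ u) (ξ t)]
  have hslope := hasDerivWithinAt_iff_tendsto_slope.1 hdiff.hasDerivWithinAt
  have hne : (nhdsWithin t (Icc 0 T \ {t})).NeBot := by
    have := uniqueDiffWithinAt_iff_accPt.1 (uniqueDiffOn_Icc hT t ht)
    rwa [accPt_principal_iff_nhdsWithin] at this
  refine le_of_tendsto hslope.norm ?_
  filter_upwards [self_mem_nhdsWithin, mem_nhdsWithin_of_mem_nhds (Metric.ball_mem_nhds t hr)]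
    with s hs hsr
  have hst : 0 < |s - t| := abs_pos.2 (sub_ne_zero.2 hs.2)
  rw [slope_def_module, norm_smul, norm_inv, Real.norm_eq_abs, inv_mul_le_iff₀ hst, mul_comm]
  exact hloc s hs.1 (by rwa [Metric.mem_ball, Real.dist_eq] at hsr)
end

section
/- Let d ≥ 1, T > 0, L ≥ 0, x, y ∈ ℝ^d, let V : ℝ^d → [0,∞) be upper semicontinuous, and let (ε_n)_{n∈ℕ} be positive reals with ε_n → 0. For each n let ξ_n : [0,T] → ℝ^d be L-Lipschitz with ξ_n(0) = x, ξ_n(T) = y, and such that for Lebesgue-almost every t ∈ [0,T], ξ_n is differentiable at t and |ξ_n'(t)| ≤ max(ε_n, V(ξ_n(t))). Then there is a subsequence of (ξ_n) converging uniformly on [0,T] to a V-path ξ with ξ(0) = x and ξ(T) = y. -/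
/-!
Two facts carry the theorem.

Compactness: the `ξ_n` are equi-Lipschitz and take values in one closed ball, so by Arzelà–Ascoli a
subsequence converges uniformly on `[0,T]` to some `ξ`, which inherits the Lipschitz constant and
the endpoints (`exists_subseq_tendstoUniformlyOn`).

Speed limit: by Rademacher's theorem `ξ` is differentiable almost everywhere, so it suffices to
bound `|ξ'(t)|` at an interior point `t` of differentiability. Let `v > V(ξ(t)) ≥ 0`. By upper
semicontinuity `V < v` on a ball around `ξ(t)`, and by uniform convergence all late `ξ_n` stay in
that ball during a fixed time window around `t`. In this window their speed is almost everywhere at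
most `v`, so they are `v`-Lipschitz there (`norm_sub_le_of_ae_speed_le`, from the fundamental
theorem of calculus for absolutely continuous functions). This bound on increments survives the
pointwise limit, hence `|ξ'(t)| ≤ v`; now let `v` decrease to `V(ξ(t))`.
-/

open MeasureTheory Set Filter
open scoped ENNReal NNReal

/-- A `V`-path on `[0,T]`: a Lipschitz function `ξ : [0,T] → ℝ^d` such that for
Lebesgue-almost every `t ∈ [0,T]`, `ξ` is differentiable at `t` (within `[0,T]`)
with `|ξ'(t)| ≤ V(ξ(t))`. -/
def IsVPath (d : ℕ) (V : EuclideanSpace ℝ (Fin d) → ℝ) (T : ℝ)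
    (ξ : ℝ → EuclideanSpace ℝ (Fin d)) : Prop :=
  (∃ L : ℝ≥0, LipschitzOnWith L ξ (Set.Icc 0 T)) ∧
    ∀ᵐ t ∂(volume.restrict (Set.Icc 0 T)),
      DifferentiableWithinAt ℝ ξ (Set.Icc 0 T) t ∧
        ‖derivWithin ξ (Set.Icc 0 T) t‖ ≤ V (ξ t)

/-- A Lipschitz curve whose speed is almost everywhere at most `v` has increments at most
`v * (b - a)`. The Lipschitz hypothesis excludes Cantor-type curves. -/
lemma norm_sub_le_of_ae_speed_le {E : Type*} [NormedAddCommGroup E] [InnerProductSpace ℝ E]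
    {f : ℝ → E} {a b v : ℝ} {L : ℝ≥0} (hab : a ≤ b) (hf : LipschitzOnWith L f (Icc a b))
    (h : ∀ᵐ t, t ∈ Ioo a b → ∃ f', HasDerivAt f f' t ∧ ‖f'‖ ≤ v) :
    ‖f b - f a‖ ≤ v * (b - a) := by
  -- Testing against the increment `u` itself reduces the claim to a real-valued function.
  set u := f b - f a with hu
  have hac : AbsolutelyContinuousOnInterval (fun t => inner ℝ u (f t)) a b := by
    have := (innerSL ℝ u).lipschitz.comp_lipschitzOnWith hf
    rw [← uIcc_of_le hab] at this
    exact this.absolutelyContinuousOnInterval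
  have hint : ‖∫ t in a..b, deriv (fun t => inner ℝ u (f t)) t‖ ≤ (‖u‖ * v) * |b - a| := by
    apply intervalIntegral.norm_integral_le_of_norm_le_const_ae
    have hb : ∀ᵐ t : ℝ, t ≠ b := by simp [ae_iff]
    filter_upwards [h, hb] with t ht htb hmem
    rw [uIoc_of_le hab] at hmem
    obtain ⟨f', hf', hle⟩ := ht ⟨hmem.1, lt_of_le_of_ne hmem.2 htb⟩
    have hd : HasDerivAt (fun t => inner ℝ u (f t)) (inner ℝ u f') t :=
      (innerSL ℝ u).hasFDerivAt.comp_hasDerivAt t hf'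
    rw [hd.deriv]
    exact (norm_inner_le_norm u f').trans (by gcongr)
  rw [hac.integral_deriv_eq_sub, ← inner_sub_right, ← hu, real_inner_self_eq_norm_sq,
    abs_of_nonneg (sub_nonneg.2 hab), Real.norm_of_nonneg (by positivity)] at hint
  rcases (norm_nonneg u).eq_or_lt with h0 | h0
  · -- Even when `u = 0` the bound needs `0 ≤ v * (b - a)`, hence a point of differentiability.
    rw [← h0]
    rcases hab.eq_or_lt with rfl | hlt
    · simp
    · obtain ⟨t, ht, htm⟩ : ∃ t, (t ∈ Ioo a b → ∃ f', HasDerivAt f f' t ∧ ‖f'‖ ≤ v) ∧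
          t ∈ Ioo a b := by
        by_contra! hcon
        have : volume (Ioo a b) = 0 := by
          apply measure_mono_null _ (ae_iff.1 h)
          intro t ht hcon'
          exact hcon t hcon' ht
        simp [Real.volume_Ioo] at this
        linarith
      obtain ⟨f', -, hle⟩ := ht htm
      exact mul_nonneg ((norm_nonneg _).trans hle) (sub_nonneg.2 hab)
  · nlinarith

/-- Arzelà–Ascoli for equi-Lipschitz curves in a proper space with a common starting point. -/
lemma exists_subseq_tendstoUniformlyOn {E : Type*} [MetricSpace E] [ProperSpace E]
    {T : ℝ} (hT : 0 ≤ T) {L : ℝ≥0} {x : E} {f : ℕ → ℝ → E}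
    (hlip : ∀ n, LipschitzOnWith L (f n) (Icc 0 T)) (h0 : ∀ n, f n 0 = x) :
    ∃ (φ : ℕ → ℕ) (g : ℝ → E), StrictMono φ ∧
      TendstoUniformlyOn (fun k => f (φ k)) g atTop (Icc 0 T) := by
  have hl : ∀ n, LipschitzWith L ((Icc 0 T).domRestrict (f n)) := fun n => (hlip n).to_restrict
  let F : ℕ → BoundedContinuousFunction (Icc (0 : ℝ) T) E := fun n =>
    BoundedContinuousFunction.mkOfCompact ⟨_, (hl n).continuous⟩
  have hcomp : IsCompact (closure (range F)) := by
    apply BoundedContinuousFunction.arzela_ascoli (Metric.closedBall x (L * T))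
      (isCompact_closedBall _ _)
    · rintro _ t ⟨n, rfl⟩
      have h := (hlip n).dist_le_mul t t.2 0 ⟨le_rfl, hT⟩
      rw [h0, Real.dist_eq, sub_zero, abs_of_nonneg t.2.1] at h
      exact h.trans (by gcongr; exact t.2.2)
    · apply UniformEquicontinuous.equicontinuous
      apply LipschitzWith.uniformEquicontinuous _ L
      rintro ⟨_, n, rfl⟩
      exact hl n
  obtain ⟨G, -, φ, hφ, hG⟩ := hcomp.tendsto_subseq (fun n => subset_closure (mem_range_self n))
  refine ⟨φ, fun t => G (projIcc 0 T hT t), hφ, ?_⟩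
  rw [BoundedContinuousFunction.tendsto_iff_tendstoUniformly] at hG
  rw [Metric.tendstoUniformlyOn_iff]
  rw [Metric.tendstoUniformly_iff] at hG
  intro ε hε
  filter_upwards [hG ε hε] with k hk t ht
  have := hk ⟨t, ht⟩
  rwa [projIcc_of_mem hT ht]

/-- deterministic core of Theorem 4.13.
Let `V : ℝ^d → [0,∞)` be upper semicontinuous, `ε_n → 0` positive, and let
`ξ_n : [0,T] → ℝ^d` be `L`-Lipschitz paths from `x` to `y` obeying the relaxed speed
limit `max(ε_n, V)` almost everywhere.  Then some subsequence converges uniformly on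
`[0,T]` to a `V`-path from `x` to `y`. -/
theorem stmt_6 (d : ℕ) (hd : 1 ≤ d) (T : ℝ) (hT : 0 < T) (L : ℝ≥0)
    (x y : EuclideanSpace ℝ (Fin d))
    (V : EuclideanSpace ℝ (Fin d) → ℝ) (hV0 : ∀ z, 0 ≤ V z)
    (hVusc : UpperSemicontinuous V)
    (ε : ℕ → ℝ) (hε : ∀ n, 0 < ε n) (hε0 : Tendsto ε atTop (nhds 0))
    (ξn : ℕ → ℝ → EuclideanSpace ℝ (Fin d))
    (hlip : ∀ n, LipschitzOnWith L (ξn n) (Set.Icc 0 T))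
    (h0 : ∀ n, ξn n 0 = x) (hTend : ∀ n, ξn n T = y)
    (hae : ∀ n, ∀ᵐ t ∂(volume.restrict (Set.Icc 0 T)),
      DifferentiableWithinAt ℝ (ξn n) (Set.Icc 0 T) t ∧
        ‖derivWithin (ξn n) (Set.Icc 0 T) t‖ ≤ max (ε n) (V (ξn n t))) :
    ∃ (φ : ℕ → ℕ) (ξ : ℝ → EuclideanSpace ℝ (Fin d)), StrictMono φ ∧
      TendstoUniformlyOn (fun k => ξn (φ k)) ξ atTop (Set.Icc 0 T) ∧
      IsVPath d V T ξ ∧ ξ 0 = x ∧ ξ T = y := by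
  obtain ⟨φ, ξ, hφ, hξ⟩ := exists_subseq_tendstoUniformlyOn hT.le hlip h0
  have hpt : ∀ t ∈ Icc 0 T, Tendsto (fun k => ξn (φ k) t) atTop (nhds (ξ t)) :=
    fun t ht => hξ.tendsto_at ht
  have hξlip : LipschitzOnWith L ξ (Icc 0 T) := by
    refine LipschitzOnWith.of_dist_le_mul fun s hs t ht => ?_
    exact le_of_tendsto ((hpt s hs).dist (hpt t ht))
      (Eventually.of_forall fun k => (hlip _).dist_le_mul s hs t ht)
  refine ⟨φ, ξ, hφ, hξ, ⟨⟨L, hξlip⟩, ?_⟩, ?_, ?_⟩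
  · rw [ae_restrict_iff' measurableSet_Icc]
    have e0 : ∀ᵐ t : ℝ, t ≠ 0 := by simp [ae_iff]
    have eT : ∀ᵐ t : ℝ, t ≠ T := by simp [ae_iff]
    filter_upwards [hξlip.ae_differentiableWithinAt_of_mem_real, e0, eT] with t hd ht0 htT ht
    refine ⟨hd ht, ?_⟩
    have htI : t ∈ Ioo 0 T := ⟨lt_of_le_of_ne ht.1 ht0.symm, lt_of_le_of_ne ht.2 htT⟩
    have hderiv : HasDerivAt ξ (derivWithin ξ (Icc 0 T) t) t :=
      (hd ht).hasDerivWithinAt.hasDerivAt (Icc_mem_nhds htI.1 htI.2)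
    refine le_of_forall_gt_imp_ge_of_dense fun v hv => ?_
    have hv0 : 0 < v := (hV0 _).trans_lt hv
    obtain ⟨r, hr, hball⟩ := Metric.eventually_nhds_iff.1 (hVusc (ξ t) v hv)
    -- While within `δ` of `t`, the limit `ξ` moves by less than `r / 2`.
    obtain ⟨δ, hδ, hwin⟩ : ∃ δ > 0, ∀ s, dist s t < δ → s ∈ Icc 0 T ∧ dist (ξ s) (ξ t) < r / 2 := by
      have h1 : ∀ᶠ s in nhds t, s ∈ Icc 0 T := Icc_mem_nhds htI.1 htI.2
      have h2 : ∀ᶠ s in nhds t, dist (ξ s) (ξ t) < r / 2 :=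
        hderiv.continuousAt (Metric.ball_mem_nhds _ (half_pos hr))
      exact Metric.eventually_nhds_iff.1 (h1.and h2)
    have hev : ∀ᶠ k in atTop, ε (φ k) < v ∧ ∀ s ∈ Icc 0 T, dist (ξ s) (ξn (φ k) s) < r / 2 :=
      ((hε0.comp hφ.tendsto_atTop).eventually (gt_mem_nhds hv0)).and
        (Metric.tendstoUniformlyOn_iff.1 hξ _ (half_pos hr))
    have key : ∀ a b, a ≤ b → dist a t < δ → dist b t < δ → ‖ξ b - ξ a‖ ≤ v * (b - a) := by
      intro a b hab ha hb
      have hsub : ∀ s ∈ Icc a b, dist s t < δ := by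
        intro s hs
        rw [Real.dist_eq, abs_lt] at *
        constructor <;> linarith [hs.1, hs.2]
      refine le_of_tendsto ((hpt b (hwin b hb).1).sub (hpt a (hwin a ha).1)).norm ?_
      filter_upwards [hev] with k hk
      apply norm_sub_le_of_ae_speed_le hab
        ((hlip (φ k)).mono fun s hs => (hwin s (hsub s hs)).1)
      filter_upwards [(ae_restrict_iff' measurableSet_Icc).1 (hae (φ k))] with s hs hsI
      have hsδ := hsub s (Ioo_subset_Icc_self hsI)
      have hsT := (hwin s hsδ).1
      refine ⟨_, (hs hsT).1.hasDerivWithinAt.hasDerivAt ?_, (hs hsT).2.trans ?_⟩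
      · exact Icc_mem_nhds ((hwin a ha).1.1.trans_lt hsI.1) (hsI.2.trans_le (hwin b hb).1.2)
      · refine max_le hk.1.le (hball ?_).le
        have h1 := hk.2 s hsT
        have h2 := (hwin s hsδ).2
        rw [dist_comm] at h1
        linarith [dist_triangle (ξn (φ k) s) (ξ s) (ξ t)]
    refine hderiv.le_of_lip' hv0.le ?_
    filter_upwards [Metric.ball_mem_nhds t hδ] with s hs
    have htt : dist t t < δ := by simpa using hδ
    rw [Real.norm_eq_abs]
    rcases le_total t s with hst | hst
    · rw [abs_of_nonneg (sub_nonneg.2 hst)]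
      exact key t s hst htt hs
    · rw [abs_sub_comm, abs_of_nonneg (sub_nonneg.2 hst), norm_sub_rev]
      exact key s t hst hs htt
  · have h := hpt 0 ⟨le_rfl, hT.le⟩
    simp only [h0] at h
    exact tendsto_nhds_unique h tendsto_const_nhds
  · have h := hpt T ⟨hT.le, le_rfl⟩
    simp only [hTend] at h
    exact tendsto_nhds_unique h tendsto_const_nhds
end

section
/- Let d ≥ 1, let M > 0, and let V : ℝ^d → [0,M] be upper semicontinuous. Let x, y ∈ ℝ^d and suppose that for some T₀ < ∞ there exists a V-path on [0,T₀] from x to y. Then there exist T* ∈ [0,T₀] and a V-path ξ* on [0,T*] with ξ*(0) = x and ξ*(T*) = y such that every V-path from x to y, on any interval [0,T], satisfies T ≥ T*. That is, a minimum-time V-path (a V-geodesic) between x and y exists. -/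
/-!
The minimum is attained by the direct method. Freezing a `V`-path outside its time interval turns
it into an `M`-Lipschitz curve on all of `ℝ` whose speed is at most `V` almost everywhere
(`IsVPath.exists_globalPath`; here `0 ≤ V` is what allows standing still), so curves with different
travel times live in one space. The infimum `T*` of the travel times is a limit of travel times
`Tₙ` of such curves `fₙ`. As `fₙ t` stays in the compact ball of radius `M |t|` around `x`, the
curves converge pointwise along an ultrafilter to some `f`, which is again `M`-Lipschitz.
Since `fₙ = y` on `[Tₙ, ∞)`, also `f = y` on `(T*, ∞)`, and `f T* = y` by continuity.

The point is that the speed limit survives (`norm_deriv_le_of_tendsto`). If `c > V (f t)`, then by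
upper semicontinuity `V < c` near `f t`. By equicontinuity there is one neighbourhood of `t` which
`fₙ`, for almost all `n`, maps into this region. There `fₙ` is `c`-Lipschitz
(`norm_sub_le_of_ae_norm_deriv_le`), hence so is `f`, and `‖deriv f t‖ ≤ c`. No weak compactness of
derivatives is needed, because a bound on the norm of the velocity is a local Lipschitz bound, and
those pass to pointwise limits.
-/

open MeasureTheory Set
open scoped ENNReal NNReal

open Filter Topology

/-- The mean value inequality for a Lipschitz curve whose derivative is bounded almost everywhere.
It follows from the fundamental theorem of calculus for the absolutely continuous function
`t ↦ ⟪f b - f a, f t⟫`. -/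
lemma norm_sub_le_of_ae_norm_deriv_le {E : Type*} [NormedAddCommGroup E] [InnerProductSpace ℝ E]
    [FiniteDimensional ℝ E] {L : ℝ≥0} {f : ℝ → E} (hf : LipschitzWith L f) {a b c : ℝ}
    (hab : a ≤ b) (hc : ∀ᵐ t, t ∈ Icc a b → ‖deriv f t‖ ≤ c) :
    ‖f b - f a‖ ≤ c * (b - a) := by
  set v := f b - f a with hv
  have hgl : LipschitzWith (‖innerSL ℝ v‖₊ * L) (fun t => inner ℝ v (f t)) :=
    (innerSL ℝ v).lipschitz.comp hf
  have hac : AbsolutelyContinuousOnInterval (fun t => inner ℝ v (f t)) a b :=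
    (hgl.lipschitzOnWith (s := uIcc a b)).absolutelyContinuousOnInterval
  have hint := hac.integral_deriv_eq_sub
  have hle : ∫ t in a..b, deriv (fun t => inner ℝ v (f t)) t ≤ ∫ _ in a..b, ‖v‖ * c := by
    apply intervalIntegral.integral_mono_ae_restrict hab hac.intervalIntegrable_deriv (by simp)
    refine (ae_restrict_iff' measurableSet_Icc).2 ?_
    filter_upwards [hc, hf.ae_differentiableAt_real] with t ht hd hmem
    have hder : HasDerivAt (fun t => inner ℝ v (f t)) (inner ℝ v (deriv f t)) t :=
      (innerSL ℝ v).hasFDerivAt.comp_hasDerivAt t hd.hasDerivAt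
    rw [hder.deriv]
    exact (real_inner_le_norm _ _).trans
      (mul_le_mul_of_nonneg_left (ht hmem) (norm_nonneg _))
  rw [hint, ← inner_sub_right, ← hv, real_inner_self_eq_norm_sq,
    intervalIntegral.integral_const, smul_eq_mul] at hle
  rcases (norm_nonneg v).eq_or_lt with h0 | hpos
  · rw [← h0]
    -- Only `0 ≤ c * (b - a)` is left; if `a < b`, some `t` satisfies `‖deriv f t‖ ≤ c`.
    rcases hab.eq_or_lt with rfl | hlt
    · simp
    · have hc0 : 0 ≤ c := by
        by_contra hneg
        have hz : ∀ᵐ t : ℝ, t ∉ Icc a b := by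
          filter_upwards [hc] with t ht hmem
          exact hneg ((norm_nonneg _).trans (ht hmem))
        have hvol : volume (Icc a b) = 0 := measure_eq_zero_iff_ae_notMem.2 hz
        rw [Real.volume_Icc, ENNReal.ofReal_eq_zero] at hvol
        linarith
      exact mul_nonneg hc0 (by linarith)
  · refine le_of_mul_le_mul_left ?_ hpos
    nlinarith

/-- A `V`-path parametrized by the whole line, with Lipschitz constant `M`. At the null set of
times where `f` is not differentiable `deriv f` is `0`, which is harmless when `0 ≤ V`. -/
def IsGlobalPath {E : Type*} [NormedAddCommGroup E] [NormedSpace ℝ E] (V : E → ℝ) (M : ℝ≥0)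
    (f : ℝ → E) : Prop :=
  LipschitzWith M f ∧ ∀ᵐ t, ‖deriv f t‖ ≤ V (f t)

/-- Stability of the speed limit under pointwise limits: in the limit it holds at every time. -/
lemma norm_deriv_le_of_tendsto {E : Type*} [NormedAddCommGroup E] [InnerProductSpace ℝ E]
    [FiniteDimensional ℝ E] {V : E → ℝ} (hV0 : ∀ z, 0 ≤ V z) (hV : UpperSemicontinuous V)
    {M : ℝ≥0} {ι : Type*} {l : Filter ι} [l.NeBot] {F : ι → ℝ → E} {f : ℝ → E}
    (hF : ∀ n, IsGlobalPath V M (F n)) (hlim : ∀ t, Tendsto (fun n => F n t) l (𝓝 (f t)))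
    (t : ℝ) : ‖deriv f t‖ ≤ V (f t) := by
  refine le_of_forall_gt_imp_ge_of_dense fun c hc => ?_
  have hc0 : 0 ≤ c := (hV0 _).trans hc.le
  obtain ⟨r, hr, hball⟩ := Metric.eventually_nhds_iff.1 (hV (f t) c hc)
  obtain ⟨δ, hδ, hMδ⟩ : ∃ δ > 0, (M : ℝ) * δ < r / 2 := by
    refine ⟨r / 2 / (M + 1), by positivity, ?_⟩
    have hM1 : (0 : ℝ) < M + 1 := by positivity
    rw [← mul_div_assoc, div_lt_iff₀ hM1]
    nlinarith
  have hclose : ∀ᶠ n in l, dist (F n t) (f t) < r / 2 :=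
    (hlim t).eventually (Metric.ball_mem_nhds _ (half_pos hr))
  have hkey : ∀ a ∈ Metric.ball t δ, ∀ b ∈ Metric.ball t δ, a ≤ b →
      ‖f b - f a‖ ≤ c * (b - a) := by
    intro a ha b hb hab
    refine le_of_tendsto ((hlim b).sub (hlim a)).norm ?_
    filter_upwards [hclose] with n hn
    refine norm_sub_le_of_ae_norm_deriv_le (hF n).1 hab ?_
    filter_upwards [(hF n).2] with s hs hmem
    refine hs.trans (hball ?_).le
    have hsδ : dist s t < δ := by
      rw [Metric.mem_ball, Real.dist_eq, abs_lt] at ha hb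
      rw [Real.dist_eq, abs_lt]
      constructor <;> linarith [hmem.1, hmem.2]
    calc dist (F n s) (f t) ≤ dist (F n s) (F n t) + dist (F n t) (f t) := dist_triangle _ _ _
      _ ≤ M * dist s t + dist (F n t) (f t) := by gcongr; exact (hF n).1.dist_le_mul s t
      _ ≤ M * δ + dist (F n t) (f t) := by gcongr
      _ < r := by linarith
  have hlip : LipschitzOnWith (Real.toNNReal c) f (Metric.ball t δ) := by
    refine LipschitzOnWith.of_dist_le_mul fun a ha b hb => ?_
    rw [Real.coe_toNNReal c hc0]
    rcases le_total a b with hab | hab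
    · rw [dist_comm, dist_comm a, dist_eq_norm, Real.dist_eq, abs_of_nonneg (sub_nonneg.2 hab)]
      exact hkey a ha b hb hab
    · rw [dist_eq_norm, Real.dist_eq, abs_of_nonneg (sub_nonneg.2 hab)]
      exact hkey b hb a ha hab
  exact (norm_deriv_le_of_lipschitzOn (Metric.ball_mem_nhds t hδ) hlip).trans_eq
    (Real.coe_toNNReal c hc0)

/-- A `V`-path on `[0,T]`, continued by its endpoints to the whole line. -/
lemma IsVPath.exists_globalPath {d : ℕ} {V : EuclideanSpace ℝ (Fin d) → ℝ} {M : ℝ≥0}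
    (hV0 : ∀ z, 0 ≤ V z) (hVM : ∀ z, V z ≤ M) {T : ℝ} (hT : 0 ≤ T)
    {ξ : ℝ → EuclideanSpace ℝ (Fin d)} (hξ : IsVPath d V T ξ) :
    ∃ f, IsGlobalPath V M f ∧ f 0 = ξ 0 ∧ ∀ s, T ≤ s → f s = ξ T := by
  obtain ⟨⟨L, hL⟩, hae⟩ := hξ
  set f : ℝ → EuclideanSpace ℝ (Fin d) := fun t => ξ (projIcc 0 T hT t) with hf
  have hfL : LipschitzWith (L * 1) f := by
    exact (hL.to_restrict).comp (LipschitzWith.projIcc hT)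
  have hder : ∀ᵐ t, ‖deriv f t‖ ≤ V (f t) := by
    have hne : ∀ a : ℝ, ∀ᵐ t : ℝ, t ≠ a := fun a => by simp [ae_iff]
    filter_upwards [(ae_restrict_iff' measurableSet_Icc).1 hae, hne 0, hne T] with t ht h0 h1
    rcases lt_or_gt_of_ne h0 with h0 | h0
    · have hev : f =ᶠ[𝓝 t] fun _ => ξ 0 := by
        filter_upwards [Iio_mem_nhds h0] with s hs
        simp [hf, projIcc_of_le_left hT (le_of_lt hs)]
      rw [hev.deriv_eq, deriv_const, norm_zero]
      exact hV0 _
    rcases lt_or_gt_of_ne h1 with h1 | h1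
    · have hev : f =ᶠ[𝓝 t] ξ := by
        filter_upwards [Icc_mem_nhds h0 h1] with s hs
        simp [hf, projIcc_of_mem hT hs]
      rw [hev.deriv_eq, hev.eq_of_nhds, ← derivWithin_of_mem_nhds (Icc_mem_nhds h0 h1)]
      exact (ht ⟨h0.le, h1.le⟩).2
    · have hev : f =ᶠ[𝓝 t] fun _ => ξ T := by
        filter_upwards [Ioi_mem_nhds h1] with s hs
        simp [hf, projIcc_of_right_le hT (le_of_lt hs)]
      rw [hev.deriv_eq, deriv_const, norm_zero]
      exact hV0 _
  have hfM : ∀ a b, a ≤ b → ‖f b - f a‖ ≤ M * (b - a) := fun a b hab =>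
    norm_sub_le_of_ae_norm_deriv_le hfL hab (by
      filter_upwards [hder] with t ht _ using ht.trans (hVM _))
  refine ⟨f, ⟨LipschitzWith.of_dist_le_mul fun a b => ?_, hder⟩, ?_, fun s hs => ?_⟩
  · rcases le_total a b with hab | hab
    · rw [dist_comm, dist_comm a, dist_eq_norm, Real.dist_eq, abs_of_nonneg (sub_nonneg.2 hab)]
      exact hfM a b hab
    · rw [dist_eq_norm, Real.dist_eq, abs_of_nonneg (sub_nonneg.2 hab)]
      exact hfM b a hab
  · simp [hf]
  · simp [hf, projIcc_of_right_le hT hs]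

lemma IsGlobalPath.isVPath {d : ℕ} {V : EuclideanSpace ℝ (Fin d) → ℝ} {M : ℝ≥0}
    {f : ℝ → EuclideanSpace ℝ (Fin d)} (hf : IsGlobalPath V M f) (T : ℝ) : IsVPath d V T f := by
  refine ⟨⟨M, hf.1.lipschitzOnWith⟩, (ae_restrict_iff' measurableSet_Icc).2 ?_⟩
  have hne : ∀ a : ℝ, ∀ᵐ t : ℝ, t ≠ a := fun a => by simp [ae_iff]
  filter_upwards [hf.2, hf.1.ae_differentiableAt_real, hne 0, hne T] with t ht hd h0 h1 hmem
  refine ⟨hd.differentiableWithinAt, ?_⟩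
  rw [derivWithin_of_mem_nhds
    (Icc_mem_nhds (lt_of_le_of_ne hmem.1 h0.symm) (lt_of_le_of_ne hmem.2 h1))]
  exact ht

/-- deterministic core of Corollary 4.4: existence of `V`-geodesics.
If `V : ℝ^d → [0,M]` is upper semicontinuous and bounded, and some `V`-path joins `x`
to `y` in time `T₀ < ∞`, then there is a minimum-time `V`-path from `x` to `y`. -/
theorem stmt_7 (d : ℕ) (hd : 1 ≤ d) (M : ℝ) (hM : 0 < M)
    (V : EuclideanSpace ℝ (Fin d) → ℝ) (hV0 : ∀ z, 0 ≤ V z) (hVM : ∀ z, V z ≤ M)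
    (hVusc : UpperSemicontinuous V)
    (x y : EuclideanSpace ℝ (Fin d)) (T₀ : ℝ) (hT₀ : 0 ≤ T₀)
    (hex : ∃ ξ : ℝ → EuclideanSpace ℝ (Fin d),
      IsVPath d V T₀ ξ ∧ ξ 0 = x ∧ ξ T₀ = y) :
    ∃ (Tstar : ℝ) (ξstar : ℝ → EuclideanSpace ℝ (Fin d)),
      0 ≤ Tstar ∧ Tstar ≤ T₀ ∧ IsVPath d V Tstar ξstar ∧
      ξstar 0 = x ∧ ξstar Tstar = y ∧
      ∀ (T : ℝ) (ξ : ℝ → EuclideanSpace ℝ (Fin d)), 0 ≤ T →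
        IsVPath d V T ξ → ξ 0 = x → ξ T = y → Tstar ≤ T := by
  lift M to ℝ≥0 using hM.le
  set A : Set ℝ := {T | 0 ≤ T ∧ ∃ f, IsGlobalPath V M f ∧ f 0 = x ∧ ∀ s, T ≤ s → f s = y}
  have hmemA : ∀ (T : ℝ) (ξ : ℝ → EuclideanSpace ℝ (Fin d)), 0 ≤ T →
      IsVPath d V T ξ → ξ 0 = x → ξ T = y → T ∈ A := by
    rintro T ξ hT hξ rfl rfl
    exact ⟨hT, hξ.exists_globalPath hV0 hVM hT⟩
  obtain ⟨ξ₀, hξ₀, hx₀, hy₀⟩ := hex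
  have hT₀A : T₀ ∈ A := hmemA T₀ ξ₀ hT₀ hξ₀ hx₀ hy₀
  have hbdd : BddBelow A := ⟨0, fun T hT => hT.1⟩
  obtain ⟨u, -, hu, huA⟩ := exists_seq_tendsto_sInf ⟨T₀, hT₀A⟩ hbdd
  choose hu0 F hF hF0 hFy using huA
  have hcpt : ∀ t, ∃ z, Tendsto (fun n => F n t) (hyperfilter ℕ) (𝓝 z) := by
    intro t
    have hmem : ∀ n, F n t ∈ Metric.closedBall x (M * dist t 0) := fun n => by
      rw [Metric.mem_closedBall, ← hF0 n]
      exact (hF n).1.dist_le_mul t 0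
    obtain ⟨z, -, hz⟩ := (isCompact_closedBall x (M * dist t 0)).ultrafilter_le_nhds
      ((hyperfilter ℕ).map fun n => F n t)
      (le_principal_iff.2 (Ultrafilter.mem_map.2 (univ_mem' hmem)))
    exact ⟨z, hz⟩
  choose f hf using hcpt
  have hlip : LipschitzWith M f := LipschitzWith.of_dist_le_mul fun a b =>
    le_of_tendsto ((hf a).dist (hf b)) (Eventually.of_forall fun n => (hF n).1.dist_le_mul a b)
  have hpath : IsGlobalPath V M f :=
    ⟨hlip, ae_of_all _ (norm_deriv_le_of_tendsto hV0 hVusc hF hf)⟩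
  have hfy : ∀ s ∈ Ioi (sInf A), f s = y := by
    intro s hs
    refine tendsto_nhds_unique (hf s) (tendsto_const_nhds.congr' ?_)
    have hev : ∀ᶠ n in hyperfilter ℕ, u n < s :=
      (hu.eventually (Iio_mem_nhds hs)).filter_mono Nat.hyperfilter_le_atTop
    filter_upwards [hev] with n hn using (hFy n s hn.le).symm
  have hend : f (sInf A) = y := by
    have hcl : closure (Ioi (sInf A)) ⊆ {s | f s = y} :=
      closure_minimal hfy (isClosed_eq hlip.continuous continuous_const)
    rw [closure_Ioi] at hcl
    exact hcl self_mem_Ici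
  have hstart : f 0 = x :=
    tendsto_nhds_unique (hf 0) (by simp only [hF0]; exact tendsto_const_nhds)
  exact ⟨sInf A, f, le_csInf ⟨T₀, hT₀A⟩ fun T hT => hT.1, csInf_le hbdd hT₀A, hpath.isVPath _,
    hstart, hend, fun T ξ hT hξ h0 h1 => csInf_le hbdd (hmemA T ξ hT hξ h0 h1)⟩
end

section
/- Let d ≥ 1, let V : ℝ^d → [0,∞) be any function, let x, y ∈ ℝ^d, and let T ≥ 0. Suppose that every V-path from x to y, on any interval [0,S], satisfies S ≥ T (so T is the minimal connection time). Let ξ₁ and ξ₂ be V-paths on [0,T] with ξ₁(0) = ξ₂(0) = x and ξ₁(T) = ξ₂(T) = y. If ξ₁(s) = ξ₂(t) for some s, t ∈ [0,T], then s = t. (Two minimum-time paths between the same endpoints must visit any common point at the same relative time.) -/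
/-!
If the two paths meet at `ξ₁ s = ξ₂ t`, following `ξ₁` up to time `s` and then `ξ₂` from time `t`
onwards is again a `V`-path from `x` to `y` (`IsVPath.concat`), of duration `s + (T - t)`.
Minimality of `T` gives `t ≤ s`; exchanging the two paths gives `s ≤ t`.

Finitely many times are Lebesgue-null, so the speed condition only has to be checked at times
interior to one of the two pieces, where the derivative within the interval is the
ordinary derivative (`isVPath_iff`) and the concatenation locally agrees with a time shift of one
of the given paths.
-/

open MeasureTheory Set
open scoped ENNReal NNReal

/-- The endpoints form a null set, so the speed condition can be tested on the open interval with
ordinary derivatives. -/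
lemma isVPath_iff {d : ℕ} {V : EuclideanSpace ℝ (Fin d) → ℝ} {T : ℝ}
    {ξ : ℝ → EuclideanSpace ℝ (Fin d)} :
    IsVPath d V T ξ ↔ (∃ L : ℝ≥0, LipschitzOnWith L ξ (Icc 0 T)) ∧
      ∀ᵐ r : ℝ, r ∈ Ioo 0 T → DifferentiableAt ℝ ξ r ∧ ‖deriv ξ r‖ ≤ V (ξ r) := by
  unfold IsVPath
  refine and_congr_right fun _ => ?_
  rw [← restrict_Ioo_eq_restrict_Icc, ae_restrict_iff' measurableSet_Ioo]
  refine Filter.eventually_congr (Filter.Eventually.of_forall fun r => ?_)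
  refine imp_congr_right fun hr => ?_
  have hn : Icc 0 T ∈ nhds r := Icc_mem_nhds hr.1 hr.2
  rw [derivWithin_of_mem_nhds hn]
  exact and_congr_left fun _ => ⟨fun h => h.differentiableAt hn, fun h => h.differentiableWithinAt⟩

/-- Following `ξ₁` up to time `s`, then `ξ₂` from time `t` onwards, is a `V`-path whenever
`ξ₁ s = ξ₂ t`. -/
lemma IsVPath.concat {d : ℕ} {V : EuclideanSpace ℝ (Fin d) → ℝ} {T s t : ℝ}
    {ξ₁ ξ₂ : ℝ → EuclideanSpace ℝ (Fin d)} (h₁ : IsVPath d V T ξ₁) (h₂ : IsVPath d V T ξ₂)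
    (hs : s ∈ Icc 0 T) (ht : t ∈ Icc 0 T) (hst : ξ₁ s = ξ₂ t) :
    IsVPath d V (s + (T - t)) (fun r => if r ≤ s then ξ₁ r else ξ₂ (r + (t - s))) := by
  obtain ⟨⟨L₁, hL₁⟩, h₁⟩ := isVPath_iff.1 h₁
  obtain ⟨⟨L₂, hL₂⟩, h₂⟩ := isVPath_iff.1 h₂
  obtain ⟨hs0, hsT⟩ := hs
  obtain ⟨ht0, htT⟩ := ht
  refine isVPath_iff.2 ⟨⟨L₁ + L₂, LipschitzOnWith.of_dist_le_mul fun a ha b hb => ?_⟩, ?_⟩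
  · obtain ⟨ha0, haS⟩ := ha
    obtain ⟨hb0, hbS⟩ := hb
    wlog hab : a ≤ b generalizing a b
    · rw [dist_comm, dist_comm a b]
      exact this (a := b) (b := a) hb0 hbS ha0 haS (le_of_not_ge hab)
    have key₁ : ∀ u v, 0 ≤ u → u ≤ v → v ≤ T → dist (ξ₁ u) (ξ₁ v) ≤ L₁ * (v - u) := by
      intro u v hu huv hv
      have := hL₁.dist_le_mul u ⟨hu, huv.trans hv⟩ v ⟨hu.trans huv, hv⟩
      rwa [dist_comm u v, Real.dist_eq, abs_of_nonneg (sub_nonneg.2 huv)] at this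
    have key₂ : ∀ u v, 0 ≤ u → u ≤ v → v ≤ T → dist (ξ₂ u) (ξ₂ v) ≤ L₂ * (v - u) := by
      intro u v hu huv hv
      have := hL₂.dist_le_mul u ⟨hu, huv.trans hv⟩ v ⟨hu.trans huv, hv⟩
      rwa [dist_comm u v, Real.dist_eq, abs_of_nonneg (sub_nonneg.2 huv)] at this
    have p₁ : (0 : ℝ) ≤ L₁ := L₁.2
    have p₂ : (0 : ℝ) ≤ L₂ := L₂.2
    rw [dist_comm a b, Real.dist_eq, abs_of_nonneg (sub_nonneg.2 hab), NNReal.coe_add]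
    by_cases has : a ≤ s <;> by_cases hbs : b ≤ s <;> simp only [has, hbs, if_true, if_false]
    · have := key₁ a b ha0 hab (by linarith)
      nlinarith
    · -- The two times lie on different pieces: pass through the junction point.
      have i₁ := key₁ a s ha0 has hsT
      have i₂ := key₂ t (b + (t - s)) ht0 (by linarith) (by linarith)
      rw [← hst] at i₂
      have := dist_triangle (ξ₁ a) (ξ₁ s) (ξ₂ (b + (t - s)))
      nlinarith
    · linarith
    · have := key₂ (a + (t - s)) (b + (t - s)) (by linarith) (by linarith) (by linarith)
      nlinarith
  · have h₂' := (measurePreserving_add_right volume (t - s)).quasiMeasurePreserving.ae h₂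
    filter_upwards [h₁, h₂', Measure.ae_ne volume s] with r hr₁ hr₂ hrs hr
    rcases lt_or_gt_of_ne hrs with hlt | hgt
    · have e : (fun r => if r ≤ s then ξ₁ r else ξ₂ (r + (t - s))) =ᶠ[nhds r] ξ₁ := by
        filter_upwards [Iio_mem_nhds hlt] with u hu
        exact if_pos (le_of_lt hu)
      obtain ⟨hd, hv⟩ := hr₁ ⟨hr.1, by linarith⟩
      rw [e.deriv_eq, e.differentiableAt_iff, if_pos hlt.le]
      exact ⟨hd, hv⟩
    · have e : (fun r => if r ≤ s then ξ₁ r else ξ₂ (r + (t - s))) =ᶠ[nhds r]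
          fun r => ξ₂ (r + (t - s)) := by
        filter_upwards [Ioi_mem_nhds hgt] with u hu
        exact if_neg (not_le.2 hu)
      obtain ⟨hd, hv⟩ := hr₂ ⟨by linarith, by linarith [hr.2]⟩
      rw [e.deriv_eq, e.differentiableAt_iff, if_neg (not_le.2 hgt), deriv_comp_add_const]
      exact ⟨differentiableAt_comp_add_const.2 hd, hv⟩

/-- step in Theorem 5.4.
If `T` is the minimal connection time from `x` to `y` by `V`-paths, then two
minimum-time `V`-paths from `x` to `y` must visit any common point at the same time. -/
theorem stmt_11 (d : ℕ) (hd : 1 ≤ d)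
    (V : EuclideanSpace ℝ (Fin d) → ℝ) (hV0 : ∀ z, 0 ≤ V z)
    (x y : EuclideanSpace ℝ (Fin d)) (T : ℝ) (hT : 0 ≤ T)
    (hmin : ∀ (S : ℝ) (η : ℝ → EuclideanSpace ℝ (Fin d)), 0 ≤ S →
      IsVPath d V S η → η 0 = x → η S = y → T ≤ S)
    (ξ₁ ξ₂ : ℝ → EuclideanSpace ℝ (Fin d))
    (h₁ : IsVPath d V T ξ₁) (h₂ : IsVPath d V T ξ₂)
    (h₁0 : ξ₁ 0 = x) (h₁T : ξ₁ T = y) (h₂0 : ξ₂ 0 = x) (h₂T : ξ₂ T = y)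
    (s t : ℝ) (hs : s ∈ Set.Icc 0 T) (ht : t ∈ Set.Icc 0 T)
    (hst : ξ₁ s = ξ₂ t) :
    s = t := by
  have key : ∀ (ξ₁ ξ₂ : ℝ → EuclideanSpace ℝ (Fin d)), IsVPath d V T ξ₁ → IsVPath d V T ξ₂ →
      ξ₁ 0 = x → ξ₂ T = y → ∀ s ∈ Icc 0 T, ∀ t ∈ Icc 0 T, ξ₁ s = ξ₂ t → t ≤ s := by
    intro ξ₁ ξ₂ h₁ h₂ h₁0 h₂T s hs t ht hst
    have := hmin (s + (T - t)) _ (by linarith [hs.1, ht.2]) (h₁.concat h₂ hs ht hst)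
      (by simp [hs.1, h₁0]) ?_
    · linarith
    · by_cases h : s + (T - t) ≤ s
      · -- Here `t = T`: the second piece is a single point.
        have htT : t = T := le_antisymm ht.2 (by linarith)
        subst htT
        simp [hst, h₂T]
      · rw [if_neg h, show s + (T - t) + (t - s) = T by ring, h₂T]
  exact le_antisymm (key ξ₂ ξ₁ h₂ h₁ h₂0 h₁T t ht s hs hst.symm)
    (key ξ₁ ξ₂ h₁ h₂ h₁0 h₂T s hs t ht hst)
end

section
/- For θ ∈ [0,π) and p ∈ ℝ, let line(θ,p) = {x ∈ ℝ² : x₁·cos θ + x₂·sin θ = p}. Let x₁, x₂ ∈ ℝ² with r = |x₁ − x₂| > 0, and let ρ > 0 satisfy 2ρ ≤ r. Then (1/2)·Leb₂({(θ,p) ∈ [0,π) × ℝ : line(θ,p) meets the closed ball B(x₁,ρ) and line(θ,p) meets the closed ball B(x₂,ρ)}) ≥ ρ²/(2r). -/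
/-!
Write `fᵢ θ` for the signed distance parameter of the line with normal angle `θ` through `xᵢ`.
The line `(θ, p)` hits `B(xᵢ, ρ)` as soon as `|p - fᵢ θ| ≤ ρ`. The difference `g = f₁ - f₂` is the
component of `x₁ - x₂` along the unit normal, so it is `r`-Lipschitz (`abs_normal_component_sub_le`)
and vanishes at some `θ₀ ∈ [0, π]`, because `g π = -g 0`. On an interval of length
`δ = ρ / r ≤ 1/2` on one side of `θ₀`, chosen so as to stay inside `(0, π)`, this gives `|g| ≤ ρ`.
For such `θ`, every `p` within `ρ / 2` of the midpoint of `f₁ θ` and `f₂ θ` gives a line that hits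
both balls. These pairs form a strip of area `δ * ρ = ρ ^ 2 / r`, which is the bound after halving.
-/

open MeasureTheory Set Real
open scoped ENNReal NNReal

/-- The witness is the orthogonal projection of `x` onto the line, at distance
`|p - (x 0 * cos θ + x 1 * sin θ)|`. -/
lemma line_inter_closedBall_nonempty (x : EuclideanSpace ℝ (Fin 2)) (θ p ρ : ℝ)
    (h : |p - (x 0 * Real.cos θ + x 1 * Real.sin θ)| ≤ ρ) :
    ({y : EuclideanSpace ℝ (Fin 2) | y 0 * Real.cos θ + y 1 * Real.sin θ = p} ∩
      Metric.closedBall x ρ).Nonempty := by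
  set s := p - (x 0 * Real.cos θ + x 1 * Real.sin θ) with hs
  refine ⟨!₂[x 0 + s * Real.cos θ, x 1 + s * Real.sin θ], ?_, ?_⟩
  · have := Real.sin_sq_add_cos_sq θ
    simp only [mem_ofPred_eq, Matrix.cons_val_zero, Matrix.cons_val_one]
    linear_combination s * this + hs
  · rw [Metric.mem_closedBall, EuclideanSpace.dist_eq]
    simp only [Fin.sum_univ_two, Matrix.cons_val_zero, Matrix.cons_val_one,
      Real.dist_eq, sq_abs]
    have : (x 0 + s * Real.cos θ - x 0) ^ 2 + (x 1 + s * Real.sin θ - x 1) ^ 2 = s ^ 2 := by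
      linear_combination s ^ 2 * Real.sin_sq_add_cos_sq θ
    rwa [this, Real.sqrt_sq_eq_abs]

lemma abs_normal_component_sub_le (a b r : ℝ) (hr : 0 ≤ r) (hab : a ^ 2 + b ^ 2 = r ^ 2)
    (s t : ℝ) :
    |(a * Real.cos t + b * Real.sin t) - (a * Real.cos s + b * Real.sin s)| ≤ r * |t - s| := by
  have hd : ∀ u ∈ (univ : Set ℝ), HasDerivWithinAt (fun u => a * Real.cos u + b * Real.sin u)
      (a * -Real.sin u + b * Real.cos u) univ u := fun u _ =>
    (((Real.hasDerivAt_cos u).const_mul a).add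
      ((Real.hasDerivAt_sin u).const_mul b)).hasDerivWithinAt
  refine convex_univ.norm_image_sub_le_of_norm_hasDerivWithin_le hd (fun u _ => ?_)
    (mem_univ s) (mem_univ t)
  -- Cauchy–Schwarz, in the form of Lagrange's identity.
  refine abs_le_of_sq_le_sq ?_ hr
  have h1 := Real.sin_sq_add_cos_sq u
  have : (a * -Real.sin u + b * Real.cos u) ^ 2 + (a * Real.cos u + b * Real.sin u) ^ 2
      = r ^ 2 := by
    linear_combination (a ^ 2 + b ^ 2) * h1 + hab
  nlinarith [sq_nonneg (a * Real.cos u + b * Real.sin u)]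

lemma exists_normal_component_eq_zero (a b : ℝ) :
    ∃ θ ∈ Icc 0 Real.pi, a * Real.cos θ + b * Real.sin θ = 0 := by
  have hc : ContinuousOn (fun u => a * Real.cos u + b * Real.sin u) (uIcc 0 Real.pi) := by
    fun_prop
  have h0 : (0 : ℝ) ∈ uIcc (a * Real.cos 0 + b * Real.sin 0)
      (a * Real.cos Real.pi + b * Real.sin Real.pi) := by
    simp only [Real.cos_zero, Real.sin_zero, Real.cos_pi, Real.sin_pi, mem_uIcc]
    rcases le_total a 0 with h | h
    · left; constructor <;> linarith
    · right; constructor <;> linarith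
  obtain ⟨θ, hθ, h⟩ := intermediate_value_uIcc hc h0
  rw [uIcc_of_le Real.pi_pos.le] at hθ
  exact ⟨θ, hθ, h⟩

/-- the `d = 2` hitting-set lower bound from the proof of Theorem 4.1.
With `line(θ,p) = {x ∈ ℝ² : x₁ cos θ + x₂ sin θ = p}`, for `x₁, x₂ ∈ ℝ²` at distance
`r > 0` and `0 < ρ` with `2ρ ≤ r`, the invariant line measure `(1/2)·Leb₂` of the set
of parameters `(θ,p) ∈ [0,π) × ℝ` whose line hits both closed balls `B(x₁,ρ)` and
`B(x₂,ρ)` is at least `ρ²/(2r)`. -/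
theorem stmt_16 (x₁ x₂ : EuclideanSpace ℝ (Fin 2)) (r ρ : ℝ)
    (hr : r = dist x₁ x₂) (hrpos : 0 < r) (hρ : 0 < ρ) (hρr : 2 * ρ ≤ r) :
    ENNReal.ofReal (ρ ^ 2 / (2 * r)) ≤
      (1 / 2 : ℝ≥0∞) * volume {q : ℝ × ℝ | q.1 ∈ Set.Ico 0 Real.pi ∧
        ({x : EuclideanSpace ℝ (Fin 2) | x 0 * Real.cos q.1 + x 1 * Real.sin q.1 = q.2} ∩
          Metric.closedBall x₁ ρ).Nonempty ∧
        ({x : EuclideanSpace ℝ (Fin 2) | x 0 * Real.cos q.1 + x 1 * Real.sin q.1 = q.2} ∩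
          Metric.closedBall x₂ ρ).Nonempty} := by
  have hab : (x₁ 0 - x₂ 0) ^ 2 + (x₁ 1 - x₂ 1) ^ 2 = r ^ 2 := by
    rw [hr, EuclideanSpace.dist_eq, Real.sq_sqrt (by positivity)]
    simp [Fin.sum_univ_two, Real.dist_eq, sq_abs]
  obtain ⟨θ₀, ⟨h0, hπ⟩, hz⟩ := exists_normal_component_eq_zero (x₁ 0 - x₂ 0) (x₁ 1 - x₂ 1)
  set δ := ρ / r with hδ
  have hδpos : 0 < δ := by positivity
  have hδle : δ ≤ 1 / 2 := by rw [hδ, div_le_iff₀ hrpos]; linarith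
  have hrδ : r * δ = ρ := by rw [hδ]; field_simp
  -- Since `δ ≤ 1/2 < π/2`, the interval on one of the two sides of `θ₀` stays inside `(0, π)`.
  obtain ⟨c, hc⟩ : ∃ c, ∀ θ ∈ Ioo c (c + δ), θ ∈ Ico 0 Real.pi ∧ |θ - θ₀| ≤ δ := by
    have hpi := Real.pi_gt_three
    rcases le_total θ₀ 1 with h | h
    · refine ⟨θ₀, fun θ hθ => ⟨⟨?_, ?_⟩, abs_le.2 ⟨?_, ?_⟩⟩⟩ <;> linarith [hθ.1, hθ.2]
    · refine ⟨θ₀ - δ, fun θ hθ => ⟨⟨?_, ?_⟩, abs_le.2 ⟨?_, ?_⟩⟩⟩ <;> linarith [hθ.1, hθ.2]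
  let m : ℝ → ℝ := fun θ => ((x₁ 0 + x₂ 0) * Real.cos θ + (x₁ 1 + x₂ 1) * Real.sin θ) / 2
  have hm : Measurable m := by fun_prop
  have hvol : volume (regionBetween (fun θ => m θ - ρ / 2) (fun θ => m θ + ρ / 2)
      (Ioo c (c + δ))) = ENNReal.ofReal (ρ ^ 2 / r) := by
    rw [Measure.volume_eq_prod, volume_regionBetween_eq_lintegral
      (by fun_prop) (by fun_prop) measurableSet_Ioo]
    have : ∀ θ, ((fun θ => m θ + ρ / 2) - fun θ => m θ - ρ / 2) θ = ρ := fun θ => by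
      simp only [Pi.sub_apply]; ring
    simp only [this, lintegral_const, Measure.restrict_apply_univ, Real.volume_Ioo]
    rw [← ENNReal.ofReal_mul hρ.le]
    congr 1
    rw [hδ]; ring
  have hhalf : ENNReal.ofReal (ρ ^ 2 / (2 * r)) =
      (1 / 2 : ℝ≥0∞) * ENNReal.ofReal (ρ ^ 2 / r) := by
    have : (1 / 2 : ℝ≥0∞) = ENNReal.ofReal (1 / 2) := by
      rw [ENNReal.ofReal_div_of_pos (by norm_num)]; simp
    rw [this, ← ENNReal.ofReal_mul (by norm_num)]
    congr 1
    field_simp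
  rw [hhalf, ← hvol]
  gcongr
  rintro ⟨θ, p⟩ ⟨hθ, hp1, hp2⟩
  obtain ⟨hmem, hdist⟩ := hc θ hθ
  have hg := abs_normal_component_sub_le _ _ r hrpos.le hab θ₀ θ
  rw [hz, sub_zero] at hg
  obtain ⟨hg1, hg2⟩ := abs_le.1 (hg.trans ((mul_le_mul_of_nonneg_left hdist hrpos.le).trans hrδ.le))
  simp only [m] at hp1 hp2 hθ
  refine ⟨hmem, line_inter_closedBall_nonempty x₁ θ p ρ (abs_le.2 ⟨?_, ?_⟩),
    line_inter_closedBall_nonempty x₂ θ p ρ (abs_le.2 ⟨?_, ?_⟩)⟩ <;> nlinarith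
end

section
/- For r > 0, let S₁ = {0} × [0,r] be a vertical segment and S₂ = [−3r/4, −r/2] × {0} a horizontal segment in ℝ². With line(θ,p) = {x ∈ ℝ² : x₁·cos θ + x₂·sin θ = p} for (θ,p) ∈ [0,π) × ℝ, we have (1/2)·Leb₂({(θ,p) : line(θ,p) ∩ S₁ ≠ ∅ and line(θ,p) ∩ S₂ ≠ ∅}) = (√5 − 2)·r/4. -/
/-! Fix the angle `θ ∈ [0, π)`. The line `line(θ,p)` hits the vertical segment iff `0 ≤ p ≤ r sin θ`,
and hits the horizontal one iff `p` lies between `-(r/2) cos θ` and `-(3r/4) cos θ`; when `p ≥ 0`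
this forces `cos θ ≤ 0`. Hence the admissible `p` fill the (possibly empty) interval
`[-(r/2) cos θ, min (r sin θ) (-(3r/4) cos θ)]` (`hitting_set_eq`). By Fubini, the area of the
parameter set is the integral over `θ` of the positive part of the length of this interval
(`volume_strip`). With `sin β = 3/5`, `cos β = 4/5` and `sin α = 1/√5`, `cos α = 2/√5`, this
positive part is

* `0` on `[0, π/2)`,
* `-(r/4) cos θ` on `[π/2, π - β)`,
* `r sin θ + (r/2) cos θ` on `[π - β, π - α)`,
* `0` on `[π - α, π)`,

and integrating by the fundamental theorem of calculus gives `r (√5/2 - 1)`.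
-/

open MeasureTheory Set Real
open scoped ENNReal NNReal

theorem line_hits_vertical (r θ p : ℝ) (hr : 0 < r) (hs : 0 ≤ Real.sin θ) :
    ({x : EuclideanSpace ℝ (Fin 2) | x 0 * Real.cos θ + x 1 * Real.sin θ = p} ∩
        {x : EuclideanSpace ℝ (Fin 2) | x 0 = 0 ∧ x 1 ∈ Set.Icc 0 r}).Nonempty ↔
      0 ≤ p ∧ p ≤ r * Real.sin θ := by
  constructor
  · rintro ⟨x, hx, h0, h1, h2⟩
    simp only [mem_ofPred_eq, h0, zero_mul, zero_add] at hx
    subst hx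
    exact ⟨mul_nonneg h1 hs, mul_le_mul_of_nonneg_right h2 hs⟩
  · rintro ⟨h0, h1⟩
    rcases hs.eq_or_lt with hs' | hs'
    · have hp : p = 0 := by rw [← hs', mul_zero] at h1; exact le_antisymm h1 h0
      exact ⟨!₂[0, 0], by simp [hp], by simp [hr.le]⟩
    · refine ⟨!₂[0, p / Real.sin θ], ?_, ?_⟩
      · simp [hs'.ne']
      · simp only [mem_ofPred_eq]
        refine ⟨by simp, ?_⟩
        simp only [Matrix.cons_val_one, Matrix.cons_val_fin_one]
        exact ⟨by positivity, (div_le_iff₀ hs').2 h1⟩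

/-- Only lines with `p ≥ 0` matter, since the line must also hit the vertical segment. -/
theorem line_hits_horizontal (r θ p : ℝ) (hr : 0 < r) (hp : 0 ≤ p) :
    ({x : EuclideanSpace ℝ (Fin 2) | x 0 * Real.cos θ + x 1 * Real.sin θ = p} ∩
        {x : EuclideanSpace ℝ (Fin 2) | x 1 = 0 ∧
          x 0 ∈ Set.Icc (-(3 * r / 4)) (-(r / 2))}).Nonempty ↔
      -(r / 2) * Real.cos θ ≤ p ∧ p ≤ -(3 * r / 4) * Real.cos θ := by
  constructor
  · rintro ⟨x, hx, h0, h1, h2⟩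
    simp only [mem_ofPred_eq, h0, zero_mul, add_zero] at hx
    have hc : Real.cos θ ≤ 0 := by
      by_contra! h
      nlinarith
    constructor <;> nlinarith
  · rintro ⟨h0, h1⟩
    have hc : Real.cos θ ≤ 0 := by
      by_contra! h
      nlinarith
    rcases hc.eq_or_lt with hc' | hc'
    · have hp : p = 0 := by rw [hc', mul_zero] at h1; exact le_antisymm h1 hp
      refine ⟨!₂[-(r / 2), 0], by simp [hp, hc'], by simp, ?_⟩
      simp only [Matrix.cons_val_zero]
      constructor <;> linarith
    · refine ⟨!₂[p / Real.cos θ, 0], by simp [hc'.ne], by simp, ?_⟩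
      simp only [Matrix.cons_val_zero]
      exact ⟨(le_div_iff_of_neg hc').2 h1, (div_le_iff_of_neg hc').2 h0⟩

/-- The two hitting conditions combined, with the redundant bound `0 ≤ p` dropped, so that each
slice at fixed angle is a single interval. -/
theorem hitting_set_eq (r : ℝ) (hr : 0 < r) :
    {q : ℝ × ℝ | q.1 ∈ Set.Ico 0 Real.pi ∧
      ({x : EuclideanSpace ℝ (Fin 2) | x 0 * Real.cos q.1 + x 1 * Real.sin q.1 = q.2} ∩
        {x : EuclideanSpace ℝ (Fin 2) | x 0 = 0 ∧ x 1 ∈ Set.Icc 0 r}).Nonempty ∧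
      ({x : EuclideanSpace ℝ (Fin 2) | x 0 * Real.cos q.1 + x 1 * Real.sin q.1 = q.2} ∩
        {x : EuclideanSpace ℝ (Fin 2) | x 1 = 0 ∧
          x 0 ∈ Set.Icc (-(3 * r / 4)) (-(r / 2))}).Nonempty} =
    {q : ℝ × ℝ | q.1 ∈ Set.Ico 0 Real.pi ∧ q.2 ∈ Set.Icc (-(r / 2) * Real.cos q.1)
      (min (r * Real.sin q.1) (-(3 * r / 4) * Real.cos q.1))} := by
  ext ⟨θ, p⟩
  simp only [mem_ofPred_eq]
  refine and_congr_right fun hθ => ?_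
  rw [line_hits_vertical r θ p hr (Real.sin_nonneg_of_mem_Icc ⟨hθ.1, hθ.2.le⟩)]
  constructor
  · rintro ⟨⟨h0, h1⟩, h⟩
    rw [line_hits_horizontal r θ p hr h0] at h
    exact ⟨h.1, le_min h1 h.2⟩
  · rintro ⟨h0, h1⟩
    have h2 := h1.trans (min_le_left _ _)
    have h3 := h1.trans (min_le_right _ _)
    -- The interval between `-(r/2) cos θ` and `-(3r/4) cos θ` is nonempty only if `cos θ ≤ 0`.
    have hc : Real.cos θ ≤ 0 := by
      by_contra! h
      nlinarith
    have hp : 0 ≤ p := by nlinarith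
    exact ⟨⟨hp, h2⟩, (line_hits_horizontal r θ p hr hp).2 ⟨h0, h3⟩⟩

/-- Area between two continuous graphs over an interval. No order between `f` and `g` is needed:
`ENNReal.ofReal` truncates the negative lengths of empty slices to `0`. -/
theorem volume_strip (u v : ℝ) (f g : ℝ → ℝ) (hf : Continuous f) (hg : Continuous g) :
    volume {q : ℝ × ℝ | q.1 ∈ Set.Ico u v ∧ q.2 ∈ Set.Icc (f q.1) (g q.1)} =
      ∫⁻ θ in Set.Ico u v, ENNReal.ofReal (g θ - f θ) := by
  have hm : MeasurableSet {q : ℝ × ℝ | q.1 ∈ Set.Ico u v ∧ q.2 ∈ Set.Icc (f q.1) (g q.1)} := by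
    refine (measurable_fst measurableSet_Ico).inter ?_
    exact (measurableSet_le (hf.measurable.comp measurable_fst) measurable_snd).inter
      (measurableSet_le measurable_snd (hg.measurable.comp measurable_fst))
  rw [Measure.volume_eq_prod, Measure.prod_apply hm, ← lintegral_indicator measurableSet_Ico]
  refine lintegral_congr fun θ => ?_
  by_cases h : θ ∈ Set.Ico u v
  · rw [indicator_of_mem h, ← Real.volume_Icc]
    congr 1
    ext p
    simp only [mem_preimage, mem_ofPred_eq, h, true_and]
  · rw [indicator_of_notMem h]
    convert measure_empty (μ := (volume : Measure ℝ))
    ext p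
    simp only [mem_preimage, mem_ofPred_eq, h, false_and, mem_empty_iff_false]

/-- Fundamental theorem of calculus for one piece of the integral: on `[u, v)` the positive part of
`f` is `g`, with primitive `G`. -/
theorem lintegral_piece (u v : ℝ) (huv : u ≤ v) (f g G : ℝ → ℝ) (hg : Continuous g)
    (hG : ∀ x, HasDerivAt G (g x) x)
    (hfg : ∀ x ∈ Set.Ico u v, 0 ≤ g x ∧ max (f x) 0 = g x) :
    ∫⁻ x in Set.Ico u v, ENNReal.ofReal (f x) = ENNReal.ofReal (G v - G u) := by
  have h1 : ∫⁻ x in Set.Ico u v, ENNReal.ofReal (f x) =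
      ∫⁻ x in Set.Ico u v, ENNReal.ofReal (g x) := by
    refine setLIntegral_congr_fun measurableSet_Ico fun x hx => ?_
    rw [← (hfg x hx).2]
    simp [ENNReal.ofReal_max]
  rw [h1, ← ofReal_integral_eq_lintegral_ofReal]
  · rw [integral_Ico_eq_integral_Ioc, ← intervalIntegral.integral_of_le huv,
      intervalIntegral.integral_eq_sub_of_hasDerivAt (fun x _ => hG x)
        (hg.intervalIntegrable _ _)]
  · exact (hg.integrableOn_Icc).mono_set Ico_subset_Icc_self
  · exact (ae_restrict_iff' measurableSet_Ico).2 (ae_of_all _ fun x hx => (hfg x hx).1)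

/-- The integral of slice lengths, split at the angles `π / 2`, `π - β`, `π - α`, where
`β = arctan (3/4)` and `α = arctan (1/2)` come from the slices' endpoints:
`r sin θ = -(3r/4) cos θ` at `θ = π - β` and `r sin θ = -(r/2) cos θ` at `θ = π - α`. -/
theorem lintegral_slices (r : ℝ) (hr : 0 < r) :
    ∫⁻ θ in Set.Ico 0 Real.pi, ENNReal.ofReal
      (min (r * Real.sin θ) (-(3 * r / 4) * Real.cos θ) - -(r / 2) * Real.cos θ) =
    ENNReal.ofReal (r * (Real.sqrt 5 / 2 - 1)) := by
  have h5 : Real.sqrt 5 ^ 2 = 5 := Real.sq_sqrt (by norm_num)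
  have h5' : 2 < Real.sqrt 5 := Real.lt_sqrt_of_sq_lt (by norm_num)
  have hpi := Real.pi_pos
  obtain ⟨β, hβ0, hβ1, hβs, hβc, hαβ⟩ : ∃ β, 0 ≤ β ∧ β ≤ π / 2 ∧ Real.sin β = 3 / 5 ∧
      Real.cos β = 4 / 5 ∧ Real.arctan (1 / 2) ≤ β := by
    have e : Real.sqrt (1 + (3 / 4) ^ 2) = 5 / 4 := by
      rw [Real.sqrt_eq_iff_mul_self_eq] <;> norm_num
    refine ⟨Real.arctan (3 / 4), Real.arctan_nonneg.2 (by norm_num),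
      (Real.arctan_lt_pi_div_two _).le, ?_, ?_, Real.arctan_mono (by norm_num)⟩
    · rw [Real.sin_arctan, e]; norm_num
    · rw [Real.cos_arctan, e]; norm_num
  obtain ⟨α, hα0, hαβ, hαs, hαc⟩ : ∃ α, 0 ≤ α ∧ α ≤ β ∧ Real.sin α = Real.sqrt 5 / 5 ∧
      Real.cos α = 2 * Real.sqrt 5 / 5 := by
    have e : Real.sqrt (1 + (1 / 2) ^ 2) = Real.sqrt 5 / 2 := by
      rw [Real.sqrt_eq_iff_mul_self_eq (by norm_num) (by positivity)]
      linear_combination -h5 / 4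
    refine ⟨Real.arctan (1 / 2), Real.arctan_nonneg.2 (by norm_num), hαβ, ?_, ?_⟩
    · rw [Real.sin_arctan, e]; field_simp; linarith
    · rw [Real.cos_arctan, e]; field_simp; linarith
  -- `sin (x + β)` and `sin (x + α)` have the signs of `4 sin x + 3 cos x` and
  -- `2 sin x + cos x`; these decide which term of the minimum is active and whether the
  -- slice is empty.
  have hB : ∀ x, Real.sin (x + β) = (4 * Real.sin x + 3 * Real.cos x) / 5 := fun x => by
    rw [Real.sin_add, hβs, hβc]; ring
  have hA : ∀ x, Real.sin (x + α) = Real.sqrt 5 / 5 * (2 * Real.sin x + Real.cos x) := fun x => by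
    rw [Real.sin_add, hαs, hαc]; ring
  have hsplit : Set.Ico 0 π = (Set.Ico 0 (π / 2) ∪ Set.Ico (π / 2) (π - β)) ∪
      (Set.Ico (π - β) (π - α) ∪ Set.Ico (π - α) π) := by
    rw [Ico_union_Ico_eq_Ico (by linarith) (by linarith),
      Ico_union_Ico_eq_Ico (by linarith) (by linarith),
      Ico_union_Ico_eq_Ico (by linarith) (by linarith)]
  have hG : ∀ x, HasDerivAt (fun x => -r * Real.cos x + r / 2 * Real.sin x)
      (r * Real.sin x + r / 2 * Real.cos x) x := fun x =>
    (((Real.hasDerivAt_cos x).const_mul (-r)).add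
      ((Real.hasDerivAt_sin x).const_mul (r / 2))).congr_deriv (by ring)
  rw [hsplit, lintegral_union (by measurability), lintegral_union (by measurability),
    lintegral_union (by measurability),
    lintegral_piece 0 (π / 2) (by linarith) _ (fun _ => 0) (fun _ => 0) continuous_const
      (fun x => hasDerivAt_const x 0),
    lintegral_piece (π / 2) (π - β) (by linarith) _ (fun x => -(r / 4) * Real.cos x)
      (fun x => -(r / 4) * Real.sin x) (by fun_prop)
      (fun x => (Real.hasDerivAt_sin x).const_mul _),
    lintegral_piece (π - β) (π - α) (by linarith) _
      (fun x => r * Real.sin x + r / 2 * Real.cos x)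
      (fun x => -r * Real.cos x + r / 2 * Real.sin x) (by fun_prop)
      hG,
    lintegral_piece (π - α) π (by linarith) _ (fun _ => 0) (fun _ => 0) continuous_const
      (fun x => hasDerivAt_const x 0)]
  · simp only [Real.cos_pi_sub, Real.sin_pi_sub, Real.sin_pi_div_two, hαs, hαc, hβs, hβc, sub_self,
      ENNReal.ofReal_zero, zero_add, add_zero]
    rw [← ENNReal.ofReal_add]
    · congr 1; ring
    · linarith
    -- The piece on `[π - β, π - α)` contributes `r (√5/2 - 11/10)`, so `√5 > 11/5` is needed.
    · have : 11 / 5 < Real.sqrt 5 := Real.lt_sqrt_of_sq_lt (by norm_num)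
      nlinarith
  · intro x hx
    -- On `[π - α, π)` even `r sin x + (r/2) cos x` is nonpositive: empty slices.
    have h : 0 ≤ -Real.sin (x + α) := by
      rw [← Real.sin_sub_pi]
      exact Real.sin_nonneg_of_nonneg_of_le_pi (by linarith [hx.1]) (by linarith [hx.2])
    rw [hA] at h
    have h' : 2 * Real.sin x + Real.cos x ≤ 0 := by
      by_contra! hn
      have : 0 < Real.sqrt 5 / 5 * (2 * Real.sin x + Real.cos x) := by positivity
      linarith
    refine ⟨le_rfl, max_eq_right ?_⟩
    have := min_le_left (r * Real.sin x) (-(3 * r / 4) * Real.cos x)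
    nlinarith
  · intro x hx
    -- On `[π - β, π - α)` the minimum is `r sin x`.
    have h : 0 ≤ -Real.sin (x + β) := by
      rw [← Real.sin_sub_pi]
      exact Real.sin_nonneg_of_nonneg_of_le_pi (by linarith [hx.1]) (by linarith [hx.2])
    have h' : 0 ≤ Real.sin (x + α) :=
      Real.sin_nonneg_of_nonneg_of_le_pi (by linarith [hx.1]) (by linarith [hx.2])
    rw [hB] at h
    rw [hA] at h'
    have h'' : 0 ≤ 2 * Real.sin x + Real.cos x := nonneg_of_mul_nonneg_right h' (by positivity)
    have h0 : 0 ≤ r * Real.sin x + r / 2 * Real.cos x := by nlinarith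
    refine ⟨h0, ?_⟩
    rw [min_eq_left (by nlinarith), max_eq_left (by linarith)]
    ring
  · intro x hx
    -- On `[π/2, π - β)` the minimum is `-(3r/4) cos x`.
    have hc : Real.cos x ≤ 0 :=
      Real.cos_nonpos_of_pi_div_two_le_of_le hx.1 (by linarith [hx.2])
    have h : 0 ≤ Real.sin (x + β) :=
      Real.sin_nonneg_of_nonneg_of_le_pi (by linarith [hx.1]) (by linarith [hx.2])
    rw [hB] at h
    have h0 : 0 ≤ -(r / 4) * Real.cos x := by nlinarith
    refine ⟨h0, ?_⟩
    rw [min_eq_right (by nlinarith), max_eq_left (by linarith)]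
    ring
  · intro x hx
    -- On `[0, π/2)` the second term of the minimum is already too small: `cos x ≥ 0`.
    have hc : 0 ≤ Real.cos x :=
      Real.cos_nonneg_of_neg_pi_div_two_le_of_le (by linarith [hx.1]) hx.2.le
    refine ⟨le_rfl, max_eq_right ?_⟩
    have := min_le_right (r * Real.sin x) (-(3 * r / 4) * Real.cos x)
    nlinarith
  · exact Ico_disjoint_Ico_same
  · exact Ico_disjoint_Ico_same
  · rw [Ico_union_Ico_eq_Ico (by linarith) (by linarith),
      Ico_union_Ico_eq_Ico (by linarith) (by linarith)]
    exact Ico_disjoint_Ico_same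

/-- explicit computation in the proof of Lemma 6.1.
With `line(θ,p) = {x ∈ ℝ² : x₁ cos θ + x₂ sin θ = p}`, the invariant line measure
`(1/2)·Leb₂` of the set of parameters `(θ,p) ∈ [0,π) × ℝ` whose line hits both the
vertical segment `{0} × [0,r]` and the horizontal segment `[−3r/4, −r/2] × {0}`
equals `(√5 − 2) r / 4`. -/
theorem stmt_17 (r : ℝ) (hr : 0 < r) :
    (1 / 2 : ℝ≥0∞) * volume {q : ℝ × ℝ | q.1 ∈ Set.Ico 0 Real.pi ∧
      ({x : EuclideanSpace ℝ (Fin 2) | x 0 * Real.cos q.1 + x 1 * Real.sin q.1 = q.2} ∩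
        {x : EuclideanSpace ℝ (Fin 2) | x 0 = 0 ∧ x 1 ∈ Set.Icc 0 r}).Nonempty ∧
      ({x : EuclideanSpace ℝ (Fin 2) | x 0 * Real.cos q.1 + x 1 * Real.sin q.1 = q.2} ∩
        {x : EuclideanSpace ℝ (Fin 2) | x 1 = 0 ∧
          x 0 ∈ Set.Icc (-(3 * r / 4)) (-(r / 2))}).Nonempty} =
    ENNReal.ofReal ((Real.sqrt 5 - 2) * r / 4) := by
  rw [hitting_set_eq r hr, volume_strip 0 π (fun θ => -(r / 2) * Real.cos θ)
    (fun θ => min (r * Real.sin θ) (-(3 * r / 4) * Real.cos θ)) (by fun_prop) (by fun_prop),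
    lintegral_slices r hr]
  have h2 : (1 / 2 : ℝ≥0∞) = ENNReal.ofReal (1 / 2) := by
    rw [ENNReal.ofReal_div_of_pos (by norm_num)]; simp
  rw [h2, ← ENNReal.ofReal_mul (by norm_num)]
  congr 1
  ring
end
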